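/- The node F₃₄ is the orthocenter of the triangle A₄ F A₃: the vector F₃₄ − A₃ is orthogonal to F − A₄ and the vector F₃₄ − A₄ is orthogonal to F − A₃. Likewise the node F₁₂ is the orthocenter of the triangle A₁' F A₂': the vector F₁₂ − A₁' is orthogonal to F − A₂' and the vector F₁₂ − A₂' is orthogonal to F − A₁'. -/

import Mathlib

open Real EuclideanGeometry

noncomputable def pt (x y : ℝ) : EuclideanSpace ℝ (Fin 2) :=
  (WithLp.equiv 2 (Fin 2 → ℝ)).symm ![x, y]

/-!
The diagonals make the angle `θ / 2` with the axis of symmetry, so the triangles `A₄ F A₃` and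
`A₁' F A₂'` are isosceles with apex angle `θ`. If such a triangle has half-base `b`, its altitude
from the apex has length `b / tan (θ / 2)`, while a point of that altitude is the orthocenter as
soon as its distance to the base times the length of the altitude is `b ^ 2`: this is the point at
distance `b * tan (θ / 2)` from the base.
-/

theorem pt_sub_pt (x y z w : ℝ) : pt x y - pt z w = pt (x - z) (y - w) := by
  ext i
  fin_cases i <;> simp [pt]

theorem inner_pt_pt (x y z w : ℝ) : inner ℝ (pt x y) (pt z w) = x * z + y * w := by
  simp [pt, PiLp.inner_apply, Fin.sum_univ_two, mul_comm]

theorem inner_pt_sub_pt_neg (b h k m : ℝ) :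
    inner ℝ (pt 0 m - pt b h) (pt 0 k - pt (-b) h) = (m - h) * (k - h) - b ^ 2 := by
  rw [pt_sub_pt, pt_sub_pt, inner_pt_pt]
  ring

theorem isosceles_altitudes_orthogonal {b h k m : ℝ} (hm : (m - h) * (k - h) = b ^ 2) :
    inner ℝ (pt 0 m - pt b h) (pt 0 k - pt (-b) h) = (0 : ℝ) ∧
    inner ℝ (pt 0 m - pt (-b) h) (pt 0 k - pt b h) = (0 : ℝ) := by
  have inner_right := inner_pt_sub_pt_neg b h k m
  have inner_left := inner_pt_sub_pt_neg (-b) h k m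
  rw [neg_neg, neg_sq] at inner_left
  exact ⟨inner_right.trans (sub_eq_zero.mpr hm), inner_left.trans (sub_eq_zero.mpr hm)⟩

theorem stmt_6_general (a12 a34 d θ : ℝ) (hsum : a12 + a34 ≠ 0) (hd : d ≠ 0)
    (hθ : θ = 2 * Real.arctan ((a12 + a34) / (2 * d)))
    (A₁' A₂' A₃ A₄ F F₁₂ F₃₄ : EuclideanSpace ℝ (Fin 2))
    (hA₁ : A₁' = pt (-(a12 / 2)) d) (hA₂ : A₂' = pt (a12 / 2) d)
    (hA₃ : A₃ = pt (a34 / 2) 0) (hA₄ : A₄ = pt (-(a34 / 2)) 0)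
    (hF : F = pt 0 (d * a34 / (a12 + a34)))
    (hF₁₂ : F₁₂ = pt 0 (d - a12 / 2 * Real.tan (θ / 2)))
    (hF₃₄ : F₃₄ = pt 0 (a34 / 2 * Real.tan (θ / 2))) :
    inner ℝ (F₃₄ - A₃) (F - A₄) = (0 : ℝ) ∧
    inner ℝ (F₃₄ - A₄) (F - A₃) = (0 : ℝ) ∧
    inner ℝ (F₁₂ - A₁') (F - A₂') = (0 : ℝ) ∧
    inner ℝ (F₁₂ - A₂') (F - A₁') = (0 : ℝ) := by
  have htan : Real.tan (θ / 2) = (a12 + a34) / (2 * d) := by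
    rw [hθ, mul_div_cancel_left₀ _ two_ne_zero, Real.tan_arctan]
  have lower_altitude : d * a34 / (a12 + a34) * Real.tan (θ / 2) = a34 / 2 := by
    rw [htan]
    field_simp
  have upper_altitude : (d - d * a34 / (a12 + a34)) * Real.tan (θ / 2) = a12 / 2 := by
    rw [htan]
    field_simp
    ring
  subst hA₁ hA₂ hA₃ hA₄ hF hF₁₂ hF₃₄
  obtain ⟨lower_right, lower_left⟩ := isosceles_altitudes_orthogonal
    (b := a34 / 2) (h := 0) (k := d * a34 / (a12 + a34)) (m := a34 / 2 * Real.tan (θ / 2))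
    (by linear_combination a34 / 2 * lower_altitude)
  obtain ⟨upper_right, upper_left⟩ := isosceles_altitudes_orthogonal
    (b := a12 / 2) (h := d) (k := d * a34 / (a12 + a34)) (m := d - a12 / 2 * Real.tan (θ / 2))
    (by linear_combination a12 / 2 * upper_altitude)
  exact ⟨lower_right, lower_left, upper_left, upper_right⟩

theorem stmt_6 (a12 a34 d θ : ℝ) (ha12 : 0 < a12) (ha34 : 0 < a34)
    (hd : max a12 a34 < d)
    (hθ : θ = 2 * Real.arctan ((a12 + a34) / (2 * d)))
    (A₁' A₂' A₃ A₄ F F₁₂ F₃₄ : EuclideanSpace ℝ (Fin 2))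
    (hA₁ : A₁' = pt (-(a12 / 2)) d) (hA₂ : A₂' = pt (a12 / 2) d)
    (hA₃ : A₃ = pt (a34 / 2) 0) (hA₄ : A₄ = pt (-(a34 / 2)) 0)
    (hF : F = pt 0 (d * a34 / (a12 + a34)))
    (hF₁₂ : F₁₂ = pt 0 (d - a12 / 2 * Real.tan (θ / 2)))
    (hF₃₄ : F₃₄ = pt 0 (a34 / 2 * Real.tan (θ / 2))) :
    inner ℝ (F₃₄ - A₃) (F - A₄) = (0 : ℝ) ∧
    inner ℝ (F₃₄ - A₄) (F - A₃) = (0 : ℝ) ∧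
    inner ℝ (F₁₂ - A₁') (F - A₂') = (0 : ℝ) ∧
    inner ℝ (F₁₂ - A₂') (F - A₁') = (0 : ℝ) :=
  stmt_6_general a12 a34 d θ (add_pos ha12 ha34).ne' ((lt_max_of_lt_left ha12).trans hd).ne' hθ
    A₁' A₂' A₃ A₄ F F₁₂ F₃₄ hA₁ hA₂ hA₃ hA₄ hF hF₁₂ hF₃₄
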